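/- Let r > 0 be a real number and define P_⋆ = ( (2√2 − 1)r/5, −(1 + 2√2)r/5 ). Then a point (W,Z) ∈ ℝ² with W > Z satisfies N_W(W,Z) = 0 and N_Z(W,Z) = 0 if and only if (W,Z) = P_⋆. -/

import Mathlib

noncomputable section

/-- `N_W(W,Z) = −rW − (13/8)W² − (1/4)WZ + (7/8)Z²`. -/
def NW (r W Z : ℝ) : ℝ := -r * W - (13 / 8) * W ^ 2 - (1 / 4) * W * Z + (7 / 8) * Z ^ 2

/-- `N_Z(W,Z) = −rZ + (7/8)W² − (1/4)WZ − (13/8)Z²`. -/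
def NZ (r W Z : ℝ) : ℝ := -r * Z + (7 / 8) * W ^ 2 - (1 / 4) * W * Z - (13 / 8) * Z ^ 2

/-- The point `P_⋆ = ((2√2 − 1)r/5, −(1 + 2√2)r/5)`. -/
def Pstar (r : ℝ) : ℝ × ℝ :=
  ((2 * Real.sqrt 2 - 1) * r / 5, -(1 + 2 * Real.sqrt 2) * r / 5)

/-!
In the coordinates `S = W + Z` and `D = W - Z`, adapted to the mirror symmetry `W ↔ Z`, the
difference `N_W - N_Z` is a multiple of `D * (S + 2r/5)`, and the sum `N_W + N_Z` vanishes exactly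
when `D² = -2S(S + 2r)`. The factor `D = 0` gives the two diagonal zeros `S = 0` and `S = -2r`.
The factor `S = -2r/5` forces `D² = 32r²/25`, whose roots `D = ±4√2r/5` are `P_⋆` and its mirror
image; for `r > 0` the sign of `D` tells them apart.
-/

section

variable (r W Z : ℝ)

lemma NW_sub_NZ : NW r W Z - NZ r W Z = -(5 / 2) * ((W - Z) * (W + Z + 2 * r / 5)) := by
  simp only [NW, NZ]
  ring

lemma NW_add_NZ :
    NW r W Z + NZ r W Z = -(1 / 4) * ((W - Z) ^ 2 + 2 * (W + Z) * (W + Z + 2 * r)) := by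
  simp only [NW, NZ]
  ring

lemma NW_eq_zero_and_NZ_eq_zero_iff :
    (NW r W Z = 0 ∧ NZ r W Z = 0) ↔
      (W - Z = 0 ∨ W + Z + 2 * r / 5 = 0) ∧ (W - Z) ^ 2 + 2 * (W + Z) * (W + Z + 2 * r) = 0 := by
  have h_sub := NW_sub_NZ r W Z
  have h_add := NW_add_NZ r W Z
  rw [← mul_eq_zero]
  constructor <;> rintro ⟨h₁, h₂⟩ <;> constructor <;> linarith

lemma NW_self_eq_zero_and_NZ_self_eq_zero_iff :
    (NW r W W = 0 ∧ NZ r W W = 0) ↔ W = 0 ∨ W = -r := by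
  have h_quadratic : (W - W) ^ 2 + 2 * (W + W) * (W + W + 2 * r) = 8 * (W * (W + r)) := by ring
  rw [NW_eq_zero_and_NZ_eq_zero_iff, h_quadratic, and_iff_right (Or.inl (sub_self W)),
    mul_eq_zero_iff_left (by norm_num : (8 : ℝ) ≠ 0), mul_eq_zero, ← eq_neg_iff_add_eq_zero]

lemma eq_Pstar_iff :
    (W, Z) = Pstar r ↔ W + Z + 2 * r / 5 = 0 ∧ W - Z = 4 * √2 * r / 5 := by
  rw [Pstar, Prod.mk.injEq]
  constructor <;> rintro ⟨h₁, h₂⟩ <;> constructor <;> linarith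

end

lemma mk_ne_Pstar_of_lt {r W Z : ℝ} (hr : 0 ≤ r) (hWZ : W < Z) : (W, Z) ≠ Pstar r := by
  intro h
  have h_diff : W - Z = 4 * √2 * r / 5 := ((eq_Pstar_iff r W Z).mp h).2
  have h_nonneg : 0 ≤ W - Z := by rw [h_diff]; positivity
  exact hWZ.not_ge (sub_nonneg.mp h_nonneg)

lemma NW_eq_zero_and_NZ_eq_zero_iff_of_ne {r W Z : ℝ} (hWZ : W ≠ Z) :
    (NW r W Z = 0 ∧ NZ r W Z = 0) ↔ (W, Z) = Pstar r ∨ (Z, W) = Pstar r := by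
  have h_sq (hS : W + Z + 2 * r / 5 = 0) :
      (W - Z) ^ 2 + 2 * (W + Z) * (W + Z + 2 * r) = (W - Z) ^ 2 - (4 * √2 * r / 5) ^ 2 := by
    have h_two : √2 ^ 2 = 2 := Real.sq_sqrt zero_le_two
    linear_combination (2 * (W + Z) + 16 * r / 5) * hS + 16 * r ^ 2 / 25 * h_two
  calc (NW r W Z = 0 ∧ NZ r W Z = 0)
      ↔ W + Z + 2 * r / 5 = 0 ∧ (W - Z) ^ 2 + 2 * (W + Z) * (W + Z + 2 * r) = 0 := by
        rw [NW_eq_zero_and_NZ_eq_zero_iff, or_iff_right (sub_ne_zero.mpr hWZ)]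
    _ ↔ W + Z + 2 * r / 5 = 0 ∧ (W - Z) ^ 2 = (4 * √2 * r / 5) ^ 2 :=
        and_congr_right fun hS => by rw [h_sq hS, sub_eq_zero]
    _ ↔ W + Z + 2 * r / 5 = 0 ∧ (W - Z = 4 * √2 * r / 5 ∨ Z - W = 4 * √2 * r / 5) := by
        rw [sq_eq_sq_iff_eq_or_eq_neg, ← neg_eq_iff_eq_neg, neg_sub]
    _ ↔ (W, Z) = Pstar r ∨ (Z, W) = Pstar r := by
        rw [eq_Pstar_iff, eq_Pstar_iff, add_comm Z W, and_or_left]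

theorem stmt11_general (r W Z : ℝ) :
    (NW r W Z = 0 ∧ NZ r W Z = 0) ↔
      (W, Z) = (0, 0) ∨ (W, Z) = (-r, -r) ∨ (W, Z) = Pstar r ∨ (Z, W) = Pstar r := by
  rcases eq_or_ne W Z with rfl | hWZ
  · have h_Pstar_zero (h : (W, W) = Pstar r) : W = 0 := by
      obtain ⟨h_sum, h_diff⟩ := (eq_Pstar_iff r W W).mp h
      have hr : r = 0 := by simpa using h_diff.symm
      linarith
    rw [NW_self_eq_zero_and_NZ_self_eq_zero_iff]
    simp only [Prod.mk.injEq, and_self, or_self]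
    tauto
  · have h_off_diagonal (a : ℝ) : (W, Z) ≠ (a, a) := by
      rintro ⟨⟩
      exact hWZ rfl
    rw [NW_eq_zero_and_NZ_eq_zero_iff_of_ne hWZ, or_iff_right (h_off_diagonal 0),
      or_iff_right (h_off_diagonal (-r))]

/-- for `r > 0`, the unique simultaneous zero of `N_W` and `N_Z` in the open
half-plane `W > Z` is `P_⋆`. -/
theorem stmt11 (r : ℝ) (hr : 0 < r) (W Z : ℝ) (hWZ : Z < W) :
    (NW r W Z = 0 ∧ NZ r W Z = 0) ↔ (W, Z) = Pstar r := by
  rw [stmt11_general]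
  grind [mk_ne_Pstar_of_lt hr.le hWZ]
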